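/- Between any two consecutive type-1 events, the nominal trajectory's buffer becomes empty: if type-1 events occur at times t_{a,i} < t_{a,i+1}, then t_{a,i+1} > τ_{e,i}, where τ_{e,i} is the end-time of the busy period of x(k,·) containing t_{a,i}. -/

import Mathlib

/-! A single-server FCFS queue with deterministic service time `s`, buffer size `k`
(counting the job in service), driven by a finite list `as` of arrival times.
The state is the list of (arrival time, departure time) pairs of admitted jobs. -/

/-- Process one arrival `a`: it is admitted iff the number of jobs still in the
system just before `a` is less than `k`; its service starts when the server frees
(the departure time of the previously admitted job) or at `a`, and lasts `s`. -/
noncomputable def qstep (s : ℝ) (k : ℕ) (jobs : List (ℝ × ℝ)) (a : ℝ) :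
    List (ℝ × ℝ) :=
  if (jobs.filter (fun p => decide (a ≤ p.2))).length < k then
    jobs ++ [(a, max a (((jobs.getLast?).map Prod.snd).getD a) + s)]
  else jobs

/-- The admitted jobs (arrival, departure) after processing all arrivals. -/
noncomputable def qsim (s : ℝ) (k : ℕ) (as : List ℝ) : List (ℝ × ℝ) :=
  as.foldl (qstep s k) []

/-- The admitted jobs arrived strictly before time `t`. -/
noncomputable def jobsBefore (s : ℝ) (k : ℕ) (as : List ℝ) (t : ℝ) :
    List (ℝ × ℝ) :=
  ((as.filter (fun b => decide (b < t)))).foldl (qstep s k) []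

/-- `x(k,t)`: the number of jobs in the system at time `t` (right-continuous). -/
noncomputable def xq (s : ℝ) (k : ℕ) (as : List ℝ) (t : ℝ) : ℕ :=
  ((qsim s k as).filter (fun p => decide (p.1 ≤ t) && decide (t < p.2))).length

/-- `x(k,t⁻)`: the number of jobs in the system just before time `t`. -/
noncomputable def xqMinus (s : ℝ) (k : ℕ) (as : List ℝ) (t : ℝ) : ℕ :=
  ((qsim s k as).filter (fun p => decide (p.1 < t) && decide (t ≤ p.2))).length

/-- `n(k)`: the number of jobs lost during the horizon. -/
noncomputable def nLost (s : ℝ) (k : ℕ) (as : List ℝ) : ℕ :=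
  as.length - (qsim s k as).length

/-- A loss (of the trajectory with buffer size `k`) occurs at time `a`:
`a` is an arrival time and `x(k,a⁻) = k`. -/
noncomputable def isLoss (s : ℝ) (k : ℕ) (as : List ℝ) (a : ℝ) : Bool :=
  decide (a ∈ as) &&
    decide (((jobsBefore s k as a).filter (fun p => decide (a ≤ p.2))).length = k)

/-- The end time of the busy period of `x(k,·)` containing (or next following) `t`:
the first time `u ≥ t` at which the system is empty. -/
noncomputable def busyEnd (s : ℝ) (k : ℕ) (as : List ℝ) (t : ℝ) : ℝ :=
  sInf {u : ℝ | t ≤ u ∧ xq s k as u = 0}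

/-- One step of the state machine of Definition 1, acting on `(jobs, ψ, ζ)`.
At a type-2 event (arrival to an empty system), `ψ := 0` and
`ζ := min (t_b - τ_e + ζ) s`, with `τ_e` the end of the preceding busy period.
At a type-1 event (a loss with `ψ = 0` and `ζ > s - (t_a - t_0) ≥ 0`, where `t_0`
is the service-start time of the job in service), `ψ := 1` and `ζ := 0`. -/
noncomputable def pzstep (s : ℝ) (k : ℕ) (st : List (ℝ × ℝ) × Bool × ℝ) (a : ℝ) :
    List (ℝ × ℝ) × Bool × ℝ :=
  let present := st.1.filter (fun p => decide (a ≤ p.2))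
  if present.length = 0 then
    -- type-2 event
    (qstep s k st.1 a, false,
      min (a - (((st.1.getLast?).map Prod.snd).getD 0) + st.2.2) s)
  else if present.length < k then
    (qstep s k st.1 a, st.2.1, st.2.2)
  else
    -- a loss: possibly a type-1 event
    let t0 := ((present.head?).map (fun p => p.2 - s)).getD a
    if st.2.1 = false ∧ s - (a - t0) < st.2.2 ∧ 0 ≤ s - (a - t0) then
      (qstep s k st.1 a, true, 0)
    else
      (qstep s k st.1 a, st.2.1, st.2.2)

/-- The state `(jobs, ψ, ζ)` just before time `t` (initialized `ψ = 0`, `ζ = s`). -/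
noncomputable def pzBefore (s : ℝ) (k : ℕ) (as : List ℝ) (t : ℝ) :
    List (ℝ × ℝ) × Bool × ℝ :=
  ((as.filter (fun b => decide (b < t)))).foldl (pzstep s k) ([], false, s)

/-- `ζ(t)`: the value of the auxiliary variable `ζ` at time `t`. -/
noncomputable def zetaAt (s : ℝ) (k : ℕ) (as : List ℝ) (t : ℝ) : ℝ :=
  (((as.filter (fun b => decide (b ≤ t)))).foldl (pzstep s k) ([], false, s)).2.2

/-- A type-1 event occurs at time `a`: `a` is an arrival time, `x(k,a⁻) = k`,
`ψ = 0`, and `ζ > s - (a - t_0) ≥ 0` where `t_0` is the service-start time of the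
job in service at time `a`. -/
noncomputable def isType1 (s : ℝ) (k : ℕ) (as : List ℝ) (a : ℝ) : Bool :=
  let st := pzBefore s k as a
  let present := st.1.filter (fun p => decide (a ≤ p.2))
  let t0 := ((present.head?).map (fun p => p.2 - s)).getD a
  decide (a ∈ as) && decide (present.length = k) && (!st.2.1) &&
    decide (s - (a - t0) < st.2.2) && decide (0 ≤ s - (a - t0))

/-- A type-2 event occurs at time `a`: `a` is an arrival time and `x(k,a⁻) = 0`. -/
noncomputable def isType2 (s : ℝ) (k : ℕ) (as : List ℝ) (a : ℝ) : Bool :=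
  decide (a ∈ as) &&
    decide (((jobsBefore s k as a).filter (fun p => decide (a ≤ p.2))).length = 0)

/-- The departure time ending the busy period preceding `t` (i.e. the start of the
idle period preceding `t`); `0` if no job departed before `t`. -/
noncomputable def prevDep (s : ℝ) (k : ℕ) (as : List ℝ) (t : ℝ) : ℝ :=
  ((((jobsBefore s k as t)).getLast?).map Prod.snd).getD 0

/-- `b` is the start of a lossy busy period of `x(k,·)`: a type-2 event such that
some loss occurs during the busy period `[b, busyEnd b)` begun at `b`. -/
noncomputable def startsLossyBP (s : ℝ) (k : ℕ) (as : List ℝ) (b : ℝ) : Bool :=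
  isType2 s k as b &&
    as.any (fun a =>
      isLoss s k as a && decide (b ≤ a) && decide (a < busyEnd s k as b))

/-- `N₁`: the number of type-1 events. -/
noncomputable def numType1 (s : ℝ) (k : ℕ) (as : List ℝ) : ℕ :=
  (as.filter (isType1 s k as)).length

/-- `N`: the number of lossy busy periods. -/
noncomputable def numLossyBP (s : ℝ) (k : ℕ) (as : List ℝ) : ℕ :=
  (as.filter (startsLossyBP s k as)).length

/-- `N_s`: the number of lossy busy periods whose preceding idle period is shorter
than `s`. -/
noncomputable def numLossyBPShort (s : ℝ) (k : ℕ) (as : List ℝ) : ℕ :=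
  (as.filter (fun b =>
    startsLossyBP s k as b && decide (b - prevDep s k as b < s))).length

/-- `N_ℓ`: the number of lossy busy periods whose preceding idle period has length
at least `s`. -/
noncomputable def numLossyBPLong (s : ℝ) (k : ℕ) (as : List ℝ) : ℕ :=
  (as.filter (fun b =>
    startsLossyBP s k as b && decide (s ≤ b - prevDep s k as b))).length

theorem pzstep_fst (s : ℝ) (k : ℕ) (st : List (ℝ × ℝ) × Bool × ℝ) (a : ℝ) :
    (pzstep s k st a).1 = qstep s k st.1 a := by
  simp only [pzstep]
  split_ifs <;> rfl

theorem foldl_pzstep_fst (s : ℝ) (k : ℕ) (l : List ℝ) (st : List (ℝ × ℝ) × Bool × ℝ) :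
    (l.foldl (pzstep s k) st).1 = l.foldl (qstep s k) st.1 := by
  induction l generalizing st with
  | nil => rfl
  | cons a l ih => rw [List.foldl_cons, List.foldl_cons, ih, pzstep_fst]

/-- The flag `ψ` can only be reset by an arrival to an empty system. -/
theorem pzstep_flag_reset {s : ℝ} {k : ℕ} {st : List (ℝ × ℝ) × Bool × ℝ} {a : ℝ}
    (hst : st.2.1 = true) (h : (pzstep s k st a).2.1 = false) :
    ∀ p ∈ st.1, p.2 < a := by
  simp only [pzstep] at h
  split_ifs at h with h0
  · simpa [List.filter_eq_nil_iff] using h0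
  all_goals simp_all

theorem exists_empty_of_flag_reset {s : ℝ} {k : ℕ} (l : List ℝ)
    {st : List (ℝ × ℝ) × Bool × ℝ} (hst : st.2.1 = true)
    (h : (l.foldl (pzstep s k) st).2.1 = false) :
    ∃ l₁ b l₂, l = l₁ ++ b :: l₂ ∧ ∀ p ∈ (l₁.foldl (pzstep s k) st).1, p.2 < b := by
  induction l generalizing st with
  | nil => simp_all
  | cons a l ih =>
    cases hψ : (pzstep s k st a).2.1 with
    | false => exact ⟨[], a, l, rfl, pzstep_flag_reset hst hψ⟩
    | true =>
      obtain ⟨l₁, b, l₂, rfl, hb⟩ := ih hψ h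
      exact ⟨a :: l₁, b, l₂, rfl, hb⟩

theorem mem_foldl_qstep {s : ℝ} {k : ℕ} (l : List ℝ) {jobs : List (ℝ × ℝ)} {p : ℝ × ℝ}
    (hp : p ∈ l.foldl (qstep s k) jobs) : p ∈ jobs ∨ p.1 ∈ l := by
  induction l generalizing jobs with
  | nil => exact Or.inl hp
  | cons a l ih =>
    rcases ih hp with h | h
    · unfold qstep at h
      split_ifs at h
      · rcases List.mem_append.1 h with h | h
        · exact Or.inl h
        · rw [List.mem_singleton.1 h]
          simp
      · exact Or.inl h
    · exact Or.inr (List.mem_cons_of_mem _ h)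

theorem filter_lt_of_pairwise {l r : List ℝ} {t : ℝ}
    (h : (l ++ t :: r).Pairwise (· < ·)) :
    (l ++ t :: r).filter (fun b => decide (b < t)) = l := by
  obtain ⟨-, h2, h3⟩ := List.pairwise_append.1 h
  have hl : l.filter (fun b => decide (b < t)) = l :=
    List.filter_eq_self.2 fun b hb => by simpa using h3 b hb t (by simp)
  have hr : (t :: r).filter (fun b => decide (b < t)) = [] :=
    List.filter_eq_nil_iff.2 fun b hb => by
      rcases List.mem_cons.1 hb with rfl | hb
      · simp
      · simpa using ((List.pairwise_cons.1 h2).1 b hb).le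
  rw [List.filter_append, hl, hr, List.append_nil]

theorem exists_between_departures (jobs : List (ℝ × ℝ)) {t b : ℝ} (htb : t < b)
    (h : ∀ p ∈ jobs, p.2 < b) : ∃ u, t ≤ u ∧ u < b ∧ ∀ p ∈ jobs, p.2 ≤ u := by
  induction jobs with
  | nil => exact ⟨t, le_rfl, htb, by simp⟩
  | cons q jobs ih =>
    obtain ⟨u, htu, hub, hu⟩ := ih fun p hp => h p (List.mem_cons_of_mem _ hp)
    refine ⟨max u q.2, htu.trans (le_max_left _ _), max_lt hub (h q (by simp)), ?_⟩
    intro p hp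
    rcases List.mem_cons.1 hp with rfl | hp
    · exact le_max_right _ _
    · exact (hu p hp).trans (le_max_left _ _)

theorem pzstep_flag_of_isType1 {s : ℝ} {k : ℕ} {as : List ℝ} {t : ℝ} (hk : 1 ≤ k)
    (h : isType1 s k as t = true) : (pzstep s k (pzBefore s k as t) t).2.1 = true := by
  simp only [isType1, Bool.and_eq_true, decide_eq_true_eq, Bool.not_eq_true'] at h
  obtain ⟨⟨⟨⟨-, hlen⟩, hψ⟩, hζ⟩, hnn⟩ := h
  simp only [pzstep]
  rw [if_neg (by omega), if_neg (by omega), if_pos ⟨hψ, hζ, hnn⟩]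

/-- An arrival `b` that finds the system empty bounds the end of every busy period
begun before it. -/
theorem busyEnd_lt_of_empty {s : ℝ} {k : ℕ} {l r : List ℝ} {t b : ℝ}
    (hpw : (l ++ b :: r).Pairwise (· < ·)) (htb : t < b)
    (h : ∀ p ∈ l.foldl (qstep s k) [], p.2 < b) :
    busyEnd s k (l ++ b :: r) t < b := by
  obtain ⟨u, htu, hub, hu⟩ := exists_between_departures _ htb h
  refine lt_of_le_of_lt (csInf_le ⟨t, fun v hv => hv.1⟩ ⟨htu, ?_⟩) hub
  rw [xq, List.length_eq_zero_iff, List.filter_eq_nil_iff]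
  intro p hp
  rw [qsim, List.foldl_append] at hp
  simp only [Bool.and_eq_true, decide_eq_true_eq, not_and, not_lt]
  intro hpu
  rcases mem_foldl_qstep _ hp with hp | hp
  · exact hu p hp
  · have hbp : b ≤ p.1 := by
      rcases List.mem_cons.1 hp with hp | hp
      · exact hp.ge
      · exact ((List.pairwise_cons.1 (List.pairwise_append.1 hpw).2.1).1 _ hp).le
    linarith

/-- between any two type-1 events the nominal buffer becomes empty:
if type-1 events occur at `t₁ < t₂`, then `t₂` exceeds the end-time of the busy
period of `x(k,·)` containing `t₁`. -/
theorem type1_events_separated_by_idle (s tf : ℝ) (k : ℕ) (as : List ℝ)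
    (hs : 0 < s) (hk : 1 ≤ k) (hinc : as.Chain' (· < ·))
    (hrange : ∀ a ∈ as, 0 < a ∧ a < tf)
    (t₁ t₂ : ℝ) (h1 : isType1 s k as t₁ = true) (h2 : isType1 s k as t₂ = true)
    (hlt : t₁ < t₂) :
    busyEnd s k as t₁ < t₂ := by
  have hpw : as.Pairwise (· < ·) := List.isChain_iff_pairwise.1 hinc
  have hflag₁ := pzstep_flag_of_isType1 hk h1
  simp only [isType1, Bool.and_eq_true, decide_eq_true_eq, Bool.not_eq_true'] at h1 h2
  have hmem₁ : t₁ ∈ as := h1.1.1.1.1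
  obtain ⟨⟨⟨⟨hmem₂, -⟩, hflag₂⟩, -⟩, -⟩ := h2
  have hmem : t₁ ∈ as.filter (fun b => decide (b < t₂)) :=
    List.mem_filter.2 ⟨hmem₁, by simpa using hlt⟩
  obtain ⟨l, r, rfl⟩ := List.append_of_mem hmem₂
  rw [filter_lt_of_pairwise hpw] at hmem
  rw [pzBefore, filter_lt_of_pairwise hpw] at hflag₂
  obtain ⟨l₀, m, rfl⟩ := List.append_of_mem hmem
  have hassoc : l₀ ++ t₁ :: m ++ t₂ :: r = l₀ ++ t₁ :: (m ++ t₂ :: r) := by simp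
  rw [pzBefore, hassoc, filter_lt_of_pairwise (hassoc ▸ hpw)] at hflag₁
  rw [List.foldl_append, List.foldl_cons] at hflag₂
  obtain ⟨m₁, b, m₂, rfl, hb⟩ := exists_empty_of_flag_reset m hflag₁ hflag₂
  have hsplit : l₀ ++ t₁ :: (m₁ ++ b :: m₂) ++ t₂ :: r =
      (l₀ ++ t₁ :: m₁) ++ b :: (m₂ ++ t₂ :: r) := by simp
  have hbt₂ : b < t₂ := (List.pairwise_append.1 hpw).2.2 b (by simp) t₂ (by simp)
  rw [hsplit] at hpw ⊢
  have htb : t₁ < b := (List.pairwise_append.1 hpw).2.2 t₁ (by simp) b (by simp)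
  refine (busyEnd_lt_of_empty hpw htb ?_).trans hbt₂
  rw [← List.foldl_cons, ← List.foldl_append, foldl_pzstep_fst] at hb
  exact hb
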